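/- Controlled growth of the scaling factors: Let max{2n/(n+2),1} < p < 2n/(n−2)_+ and let u, Q_{4R}, λ_o and the scaling factors μ_{z;ρ}^{(λ)} be as in the construction below. Then for every λ ≥ λ_o, every z_o ∈ Q_{2R} and all radii 0 < ρ < s ≤ R one has μ_{z_o;ρ}^{(λ)} ≤ (s/ρ)^{(n+2p)/(p−β)} μ_{z_o;s}^{(λ)}; in particular, taking s = R, μ_{z_o;ρ}^{(λ)} ≤ (4R/ρ)^{(n+2p)/(p−β)} for all ρ ∈ (0,R]. -/

import Mathlib

open MeasureTheory Set
open scoped ENNReal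

noncomputable section

abbrev Spc (n : ℕ) := EuclideanSpace ℝ (Fin n)
abbrev Vec (N : ℕ) := EuclideanSpace ℝ (Fin N)

variable {n N : ℕ}

/-- The scaled parabolic cylinder `Q_ρ^{(μ)}(z₀)`:
`B_ρ(x₀) × (t₀ − μ^{p−2}ρ^p, t₀ + μ^{p−2}ρ^p)` if `p < 2`, and
`B_{μ^{(2−p)/p}ρ}(x₀) × (t₀ − ρ^p, t₀ + ρ^p)` if `p ≥ 2`. -/
def parCyl (p μ ρ : ℝ) (z₀ : Spc n × ℝ) : Set (Spc n × ℝ) :=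
  if p < 2 then
    Metric.ball z₀.1 ρ ×ˢ Ioo (z₀.2 - μ ^ (p - 2) * ρ ^ p) (z₀.2 + μ ^ (p - 2) * ρ ^ p)
  else
    Metric.ball z₀.1 (μ ^ ((2 - p) / p) * ρ) ×ˢ Ioo (z₀.2 - ρ ^ p) (z₀.2 + ρ ^ p)

/-- The exponent `β := 2 − p + (𝔭 − 2)(2 + n/p)`, where `𝔭 = max{p, 2}`. -/
def betaEx (n : ℕ) (p : ℝ) : ℝ := 2 - p + (max p 2 - 2) * (2 + (n : ℝ) / p)

/-- The scaling factor `μ̃_{z;ρ}^{(λ)} := inf{μ ∈ [1, ∞) :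
(1/|Q_ρ|) ∬_{Q_ρ^{(μ)}(z)} |u|^p/ρ^p ≤ μ^{p−β} λ^p}`. -/
def mutilde (p lam : ℝ) (u : Spc n × ℝ → Vec N) (z : Spc n × ℝ) (ρ : ℝ) : ℝ :=
  sInf {μ : ℝ | 1 ≤ μ ∧
    (∫ w in parCyl p μ ρ z, ‖u w‖ ^ p / ρ ^ p) / (volume (parCyl p 1 ρ z)).toReal
      ≤ μ ^ (p - betaEx n p) * lam ^ p}

/-- The monotonized scaling factor `μ_{z;ρ}^{(λ)} := max_{r ∈ [ρ, R]} μ̃_{z;r}^{(λ)}`. -/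
def muF (p lam R : ℝ) (u : Spc n × ℝ → Vec N) (z : Spc n × ℝ) (ρ : ℝ) : ℝ :=
  sSup (mutilde p lam u z '' Icc ρ R)

/-!
Let `ω` be the volume of the unit ball. Since `ρ^p |Q_ρ| = 2 ω ρ^{n+2p}`, the left-hand side of the
inequality defining `μ̃_{z;ρ}` is `∬_{Q_ρ^{(μ)}(z)} |u|^p / (2 ω ρ^{n+2p})`. Passing to a smaller
cylinder of radius `r < s` thus costs at most the factor `(s/r)^{n+2p}`, while multiplying `μ` by
`(s/r)^{(n+2p)/(p-β)}` raises `μ^{p-β}` by exactly this factor and does not enlarge the cylinder.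
Hence admissibility of `μ` at radius `s` gives admissibility of `(s/r)^{(n+2p)/(p-β)} μ` at radius
`r`. The choice of `λ_o` makes `μ = 1` admissible on `Q_{4R}`, and the same comparison with `Q_{4R}`
gives the second bound.
-/

theorem integrableOn_norm_rpow_of_memLp {α E : Type*} [MeasurableSpace α] [NormedAddCommGroup E]
    {ν : Measure α} {f : α → E} {p : ℝ} {A B : Set α} (hp : 0 < p) (hAB : A ⊆ B)
    (hf : MemLp f (ENNReal.ofReal p) (ν.restrict B)) :
    IntegrableOn (fun x ↦ ‖f x‖ ^ p) A ν := by
  have hB : IntegrableOn (fun x ↦ ‖f x‖ ^ p) B ν := by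
    simpa only [IntegrableOn, ENNReal.toReal_ofReal hp.le] using
      hf.integrable_norm_rpow (ENNReal.ofReal_pos.2 hp).ne' ENNReal.ofReal_ne_top
  exact hB.mono_set hAB

theorem sSup_image_Icc_le_rpow_mul {f : ℝ → ℝ} {e ρ s R : ℝ} (he : 0 ≤ e)
    (hf₀ : ∀ r, 0 < r → r ≤ R → 0 ≤ f r)
    (hf : ∀ r s, 0 < r → r ≤ s → s ≤ R → f r ≤ (s / r) ^ e * f s)
    (hρ : 0 < ρ) (hρs : ρ ≤ s) (hsR : s ≤ R) :
    sSup (f '' Icc ρ R) ≤ (s / ρ) ^ e * sSup (f '' Icc s R) := by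
  have hs : 0 < s := hρ.trans_le hρs
  have hR : 0 < R := hs.trans_le hsR
  have hbdd : BddAbove (f '' Icc s R) := by
    refine ⟨(R / s) ^ e * f R, forall_mem_image.2 fun r hr ↦ ?_⟩
    refine (hf r R (hs.trans_le hr.1) hr.2 le_rfl).trans ?_
    have hfR : 0 ≤ f R := hf₀ R hR le_rfl
    have hsr : s ≤ r := hr.1
    have : 0 < r := hs.trans_le hsr
    gcongr
  have hle : ∀ r ∈ Icc s R, f r ≤ sSup (f '' Icc s R) := fun r hr ↦
    le_csSup hbdd (mem_image_of_mem f hr)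
  have hsup₀ : 0 ≤ sSup (f '' Icc s R) := (hf₀ s hs hsR).trans (hle s ⟨le_rfl, hsR⟩)
  refine csSup_le ((nonempty_Icc.2 (hρs.trans hsR)).image f) (forall_mem_image.2 fun r hr ↦ ?_)
  have hr₀ : 0 < r := hρ.trans_le hr.1
  rcases le_total s r with hsr | hrs
  · exact (hle r ⟨hsr, hr.2⟩).trans
      (le_mul_of_one_le_left hsup₀ (Real.one_le_rpow ((one_le_div hρ).2 hρs) he))
  · calc f r ≤ (s / r) ^ e * f s := hf r s hr₀ hrs hsR
      _ ≤ (s / r) ^ e * sSup (f '' Icc s R) := by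
          gcongr
          exact hle s ⟨le_rfl, hsR⟩
      _ ≤ (s / ρ) ^ e * sSup (f '' Icc s R) := by
          have := hr.1
          gcongr

section Exponents

variable {p : ℝ}

theorem betaEx_of_le_two (hp : p ≤ 2) : betaEx n p = 2 - p := by
  simp [betaEx, hp]

theorem le_two_or_lt_div_iff (hp : 0 < p) :
    ((n : ℝ) ≤ 2 ∨ p < 2 * (n : ℝ) / ((n : ℝ) - 2)) ↔ (n : ℝ) * (p - 2) < 2 * p := by
  rcases le_or_gt (n : ℝ) 2 with hn | hn
  · have : (n : ℝ) * (p - 2) < 2 * p := by nlinarith [mul_nonneg hp.le (sub_nonneg.2 hn)]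
    exact iff_of_true (.inl hn) this
  · rw [or_iff_right hn.not_ge, lt_div_iff₀ (sub_pos.2 hn)]
    constructor <;> intro h <;> linarith

theorem betaEx_lt_self_iff :
    betaEx n p < p ↔ 1 < p ∧ ((n : ℝ) ≤ 2 ∨ p < 2 * (n : ℝ) / ((n : ℝ) - 2)) := by
  rcases le_total p 2 with hp | hp
  · rw [betaEx_of_le_two hp]
    refine ⟨fun h ↦ ?_, fun h ↦ by linarith [h.1]⟩
    have hp₁ : 1 < p := by linarith
    refine ⟨hp₁, (le_two_or_lt_div_iff (by linarith)).2 ?_⟩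
    have : (n : ℝ) * (p - 2) ≤ 0 := mul_nonpos_of_nonneg_of_nonpos n.cast_nonneg (by linarith)
    linarith
  · have hp₀ : 0 < p := by linarith
    rw [and_iff_right (by linarith), le_two_or_lt_div_iff hp₀, ← div_lt_iff₀ hp₀, betaEx,
      max_eq_left hp, mul_div_right_comm]
    constructor <;> intro h <;> linarith

theorem pos_of_betaEx_lt_self (hβ : betaEx n p < p) : 0 < p :=
  zero_lt_one.trans (betaEx_lt_self_iff.1 hβ).1

/-- The exponent `(n + 2p) / (p − β)` governing the growth of the scaling factors. -/
def growthExponent (n : ℕ) (p : ℝ) : ℝ := ((n : ℝ) + 2 * p) / (p - betaEx n p)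

theorem growthExponent_nonneg (hβ : betaEx n p < p) : 0 ≤ growthExponent n p := by
  have hp : 0 < p := pos_of_betaEx_lt_self hβ
  exact div_nonneg (by positivity) (sub_nonneg.2 hβ.le)

theorem rpow_growthExponent_rpow (hβ : betaEx n p < p) {q : ℝ} (hq : 0 ≤ q) :
    (q ^ growthExponent n p) ^ (p - betaEx n p) = q ^ ((n : ℝ) + 2 * p) := by
  rw [← Real.rpow_mul hq, growthExponent, div_mul_cancel₀ _ (sub_pos.2 hβ).ne']

end Exponents

section Cylinders

variable {p μ μ' r s R : ℝ} {z z' : Spc n × ℝ}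

theorem parCyl_one (p ρ : ℝ) (z : Spc n × ℝ) :
    parCyl p 1 ρ z = Metric.ball z.1 ρ ×ˢ Ioo (z.2 - ρ ^ p) (z.2 + ρ ^ p) := by
  simp [parCyl]

theorem parCyl_subset_parCyl (hp : 0 ≤ p) (hμ : 0 < μ) (hμμ' : μ ≤ μ') (hr : 0 ≤ r)
    (hrs : r ≤ s) (z : Spc n × ℝ) : parCyl p μ' r z ⊆ parCyl p μ s z := by
  have hpow : r ^ p ≤ s ^ p := Real.rpow_le_rpow hr hrs hp
  unfold parCyl
  split_ifs with h
  · have htime : μ' ^ (p - 2) * r ^ p ≤ μ ^ (p - 2) * s ^ p :=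
      mul_le_mul (Real.rpow_le_rpow_of_nonpos hμ hμμ' (by linarith)) hpow
        (Real.rpow_nonneg hr _) (Real.rpow_nonneg hμ.le _)
    exact prod_mono (Metric.ball_subset_ball hrs) (Ioo_subset_Ioo (by linarith) (by linarith))
  · have hspace : μ' ^ ((2 - p) / p) * r ≤ μ ^ ((2 - p) / p) * s :=
      mul_le_mul (Real.rpow_le_rpow_of_nonpos hμ hμμ'
        (div_nonpos_of_nonpos_of_nonneg (by linarith) hp)) hrs hr (Real.rpow_nonneg hμ.le _)
    exact prod_mono (Metric.ball_subset_ball hspace)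
      (Ioo_subset_Ioo (by linarith) (by linarith))

theorem parCyl_one_subset_of_mem (hp : 1 ≤ p) (hr : 0 ≤ r) (hrs : r + s ≤ R)
    (hz : z ∈ parCyl p 1 s z') : parCyl p 1 r z ⊆ parCyl p 1 R z' := by
  simp only [parCyl_one] at hz ⊢
  obtain ⟨hspace, htime⟩ := hz
  rw [Metric.mem_ball] at hspace
  have hs : 0 ≤ s := dist_nonneg.trans hspace.le
  have hadd : r ^ p + s ^ p ≤ R ^ p := calc
    r ^ p + s ^ p ≤ (r + s) ^ p := Real.add_rpow_le_rpow_add hr hs hp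
    _ ≤ R ^ p := by gcongr
  exact prod_mono (Metric.ball_subset_ball' (by linarith))
    (Ioo_subset_Ioo (by linarith [htime.1]) (by linarith [htime.2]))

theorem volume_real_parCyl_one (hr : 0 < r) (z : Spc n × ℝ) :
    volume.real (parCyl p 1 r z) =
      r ^ ((n : ℝ) + p) * (2 * volume.real (Metric.ball (0 : Spc n) 1)) := by
  have hball : volume.real (Metric.ball z.1 r) =
      r ^ (n : ℝ) * volume.real (Metric.ball (0 : Spc n) 1) := by
    rw [measureReal_def, Measure.addHaar_ball_of_pos _ _ hr, finrank_euclideanSpace_fin,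
      ENNReal.toReal_mul, ENNReal.toReal_ofReal (by positivity), Real.rpow_natCast,
      measureReal_def]
  have hpow : 0 < r ^ p := Real.rpow_pos_of_pos hr p
  rw [parCyl_one, Measure.volume_eq_prod, measureReal_prod_prod, hball,
    Real.volume_real_Ioo_of_le (by linarith), Real.rpow_add hr]
  ring

end Cylinders

section ScaledEnergy

variable {p μ μ' r s : ℝ} {u : Spc n × ℝ → Vec N} {z z' : Spc n × ℝ}

/-- The quantity `(1/|Q_ρ|) ∬_{Q_ρ^{(μ)}(z)} |u|^p/ρ^p` compared with `μ^{p−β} λ^p` in the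
definition of `mutilde`. The normalization is by the unscaled cylinder, so this is a mean only for
`μ = 1`. -/
def scaledEnergy (p : ℝ) (u : Spc n × ℝ → Vec N) (z : Spc n × ℝ) (ρ μ : ℝ) : ℝ :=
  (∫ w in parCyl p μ ρ z, ‖u w‖ ^ p / ρ ^ p) / volume.real (parCyl p 1 ρ z)

theorem scaledEnergy_one (p : ℝ) (u : Spc n × ℝ → Vec N) (z : Spc n × ℝ) (ρ : ℝ) :
    scaledEnergy p u z ρ 1 = ⨍ w in parCyl p 1 ρ z, ‖u w‖ ^ p / ρ ^ p := by
  rw [setAverage_eq, smul_eq_mul, inv_mul_eq_div, scaledEnergy]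

theorem scaledEnergy_nonneg (hr : 0 ≤ r) : 0 ≤ scaledEnergy p u z r μ :=
  div_nonneg (integral_nonneg fun w ↦ by positivity) measureReal_nonneg

theorem scaledEnergy_eq (hr : 0 < r) :
    scaledEnergy p u z r μ = (∫ w in parCyl p μ r z, ‖u w‖ ^ p) /
      (r ^ ((n : ℝ) + 2 * p) * (2 * volume.real (Metric.ball (0 : Spc n) 1))) := by
  have hexp : (n : ℝ) + 2 * p = p + (n + p) := by ring
  rw [scaledEnergy, integral_div, div_div, volume_real_parCyl_one hr, hexp,
    Real.rpow_add hr p, mul_assoc]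

theorem scaledEnergy_le_rpow_mul (hr : 0 < r) (hs : 0 < s)
    (hsub : parCyl p μ r z ⊆ parCyl p μ' s z')
    (hu : IntegrableOn (fun w ↦ ‖u w‖ ^ p) (parCyl p μ' s z')) :
    scaledEnergy p u z r μ ≤ (s / r) ^ ((n : ℝ) + 2 * p) * scaledEnergy p u z' s μ' := by
  have hint : ∫ w in parCyl p μ r z, ‖u w‖ ^ p ≤ ∫ w in parCyl p μ' s z', ‖u w‖ ^ p :=
    setIntegral_mono_set hu (.of_forall fun w ↦ by positivity) hsub.eventuallyLE
  have hs' : s ^ ((n : ℝ) + 2 * p) ≠ 0 := (Real.rpow_pos_of_pos hs _).ne'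
  calc scaledEnergy p u z r μ
      ≤ (∫ w in parCyl p μ' s z', ‖u w‖ ^ p) /
          (r ^ ((n : ℝ) + 2 * p) * (2 * volume.real (Metric.ball (0 : Spc n) 1))) := by
        rw [scaledEnergy_eq hr]
        gcongr
    _ = (s / r) ^ ((n : ℝ) + 2 * p) * scaledEnergy p u z' s μ' := by
        rw [scaledEnergy_eq hs, Real.div_rpow hs.le hr.le]
        field_simp

end ScaledEnergy

section Admissible

variable {p lam μ r s : ℝ} {u : Spc n × ℝ → Vec N} {z z' : Spc n × ℝ}

/-- The set of parameters `μ` over which the infimum in `mutilde` is taken. -/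
def admissibleScales (p lam : ℝ) (u : Spc n × ℝ → Vec N) (z : Spc n × ℝ) (ρ : ℝ) : Set ℝ :=
  {μ | 1 ≤ μ ∧ scaledEnergy p u z ρ μ ≤ μ ^ (p - betaEx n p) * lam ^ p}

theorem mutilde_eq_sInf (p lam : ℝ) (u : Spc n × ℝ → Vec N) (z : Spc n × ℝ) (ρ : ℝ) :
    mutilde p lam u z ρ = sInf (admissibleScales p lam u z ρ) := rfl

theorem mutilde_le_of_mem (hμ : μ ∈ admissibleScales p lam u z r) :
    mutilde p lam u z r ≤ μ :=
  csInf_le ⟨1, fun _ h ↦ h.1⟩ hμ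

theorem mutilde_nonneg (p lam : ℝ) (u : Spc n × ℝ → Vec N) (z : Spc n × ℝ) (ρ : ℝ) :
    0 ≤ mutilde p lam u z ρ :=
  Real.sInf_nonneg fun _ h ↦ zero_le_one.trans h.1

theorem one_mem_admissibleScales (hp : 0 < p) (hr : 0 ≤ r)
    (hlam : (⨍ w in parCyl p 1 r z, ‖u w‖ ^ p / r ^ p) ^ (1 / p) ≤ lam) :
    1 ∈ admissibleScales p lam u z r := by
  have henergy : 0 ≤ scaledEnergy p u z r 1 := scaledEnergy_nonneg hr
  rw [← scaledEnergy_one, one_div] at hlam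
  have hlam₀ : 0 ≤ lam := (Real.rpow_nonneg henergy _).trans hlam
  refine ⟨le_rfl, ?_⟩
  rw [Real.one_rpow, one_mul]
  exact (Real.rpow_inv_le_iff_of_pos henergy hlam₀ hp).1 hlam

theorem admissibleScales_nonempty (hβ : betaEx n p < p) (hlam : 0 < lam) (hr : 0 < r)
    (hu : IntegrableOn (fun w ↦ ‖u w‖ ^ p) (parCyl p 1 r z)) :
    (admissibleScales p lam u z r).Nonempty := by
  have hp : 0 ≤ p := (pos_of_betaEx_lt_self hβ).le
  have htop : Filter.Tendsto (fun μ : ℝ ↦ μ ^ (p - betaEx n p) * lam ^ p) .atTop .atTop :=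
    (tendsto_rpow_atTop (sub_pos.2 hβ)).atTop_mul_const (Real.rpow_pos_of_pos hlam p)
  obtain ⟨μ, hμ₁, hμ⟩ := ((Filter.eventually_ge_atTop 1).and
    (htop.eventually_ge_atTop (scaledEnergy p u z r 1))).exists
  refine ⟨μ, hμ₁, le_trans ?_ hμ⟩
  simpa [hr.ne'] using scaledEnergy_le_rpow_mul hr hr
    (parCyl_subset_parCyl hp one_pos hμ₁ hr.le le_rfl z) hu

theorem rpow_mul_mem_admissibleScales (hβ : betaEx n p < p) (hr : 0 < r) (hrs : r ≤ s)
    (hsub : parCyl p μ r z ⊆ parCyl p μ s z')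
    (hu : IntegrableOn (fun w ↦ ‖u w‖ ^ p) (parCyl p μ s z'))
    (hμ : μ ∈ admissibleScales p lam u z' s) :
    (s / r) ^ growthExponent n p * μ ∈ admissibleScales p lam u z r := by
  obtain ⟨hμ₁, hμ⟩ := hμ
  have hp : 0 ≤ p := (pos_of_betaEx_lt_self hβ).le
  have hs : 0 < s := hr.trans_le hrs
  have hμ₀ : 0 < μ := zero_lt_one.trans_le hμ₁
  have hfactor : 1 ≤ (s / r) ^ growthExponent n p :=
    Real.one_le_rpow ((one_le_div hr).2 hrs) (growthExponent_nonneg hβ)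
  have hshrink : parCyl p ((s / r) ^ growthExponent n p * μ) r z ⊆ parCyl p μ s z' :=
    (parCyl_subset_parCyl hp hμ₀ (le_mul_of_one_le_left hμ₀.le hfactor) hr.le le_rfl z).trans hsub
  refine ⟨one_le_mul_of_one_le_of_one_le hfactor hμ₁, ?_⟩
  calc scaledEnergy p u z r ((s / r) ^ growthExponent n p * μ)
      ≤ (s / r) ^ ((n : ℝ) + 2 * p) * scaledEnergy p u z' s μ :=
        scaledEnergy_le_rpow_mul hr hs hshrink hu
    _ ≤ (s / r) ^ ((n : ℝ) + 2 * p) * (μ ^ (p - betaEx n p) * lam ^ p) := by gcongr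
    _ = ((s / r) ^ growthExponent n p * μ) ^ (p - betaEx n p) * lam ^ p := by
        rw [Real.mul_rpow (by positivity) hμ₀.le,
          rpow_growthExponent_rpow hβ (by positivity), mul_assoc]

theorem mutilde_le_rpow_mul_mutilde (hβ : betaEx n p < p) (hlam : 0 < lam) (hr : 0 < r)
    (hrs : r ≤ s) (hu : IntegrableOn (fun w ↦ ‖u w‖ ^ p) (parCyl p 1 s z)) :
    mutilde p lam u z r ≤ (s / r) ^ growthExponent n p * mutilde p lam u z s := by
  have hp : 0 ≤ p := (pos_of_betaEx_lt_self hβ).le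
  have hs : 0 < s := hr.trans_le hrs
  have hfactor : 0 < (s / r) ^ growthExponent n p := by positivity
  rw [← div_le_iff₀' hfactor, mutilde_eq_sInf p lam u z s]
  refine le_csInf (admissibleScales_nonempty hβ hlam hs hu) fun μ hμ ↦ ?_
  have hμ₀ : 0 < μ := zero_lt_one.trans_le hμ.1
  rw [div_le_iff₀' hfactor]
  exact mutilde_le_of_mem <| rpow_mul_mem_admissibleScales hβ hr hrs
    (parCyl_subset_parCyl hp hμ₀ le_rfl hr.le hrs z)
    (hu.mono_set (parCyl_subset_parCyl hp one_pos hμ.1 hs.le le_rfl z)) hμ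

theorem mutilde_le_rpow_of_parCyl_subset (hβ : betaEx n p < p) (hr : 0 < r) (hrs : r ≤ s)
    (hsub : parCyl p 1 r z ⊆ parCyl p 1 s z')
    (hu : IntegrableOn (fun w ↦ ‖u w‖ ^ p) (parCyl p 1 s z'))
    (hlam : (⨍ w in parCyl p 1 s z', ‖u w‖ ^ p / s ^ p) ^ (1 / p) ≤ lam) :
    mutilde p lam u z r ≤ (s / r) ^ growthExponent n p := by
  have hp : 0 < p := pos_of_betaEx_lt_self hβ
  have hone := one_mem_admissibleScales hp (hr.le.trans hrs) hlam
  simpa using mutilde_le_of_mem (rpow_mul_mem_admissibleScales hβ hr hrs hsub hu hone)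

end Admissible

section MonotonizedScalingFactor

variable {p lam ρ s R S : ℝ} {u : Spc n × ℝ → Vec N} {z z' : Spc n × ℝ}

theorem muF_le_rpow_mul_muF (hβ : betaEx n p < p) (hlam : 0 < lam)
    (hu : IntegrableOn (fun w ↦ ‖u w‖ ^ p) (parCyl p 1 R z))
    (hρ : 0 < ρ) (hρs : ρ ≤ s) (hsR : s ≤ R) :
    muF p lam R u z ρ ≤ (s / ρ) ^ growthExponent n p * muF p lam R u z s := by
  have hp : 0 ≤ p := (pos_of_betaEx_lt_self hβ).le
  refine sSup_image_Icc_le_rpow_mul (growthExponent_nonneg hβ)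
    (fun r _ _ ↦ mutilde_nonneg p lam u z r) (fun r t hr hrt htR ↦ ?_) hρ hρs hsR
  exact mutilde_le_rpow_mul_mutilde hβ hlam hr hrt
    (hu.mono_set (parCyl_subset_parCyl hp one_pos le_rfl (hr.le.trans hrt) htR z))

theorem muF_le_rpow_of_parCyl_subset (hβ : betaEx n p < p) (hRS : R ≤ S)
    (hsub : parCyl p 1 R z ⊆ parCyl p 1 S z')
    (hu : IntegrableOn (fun w ↦ ‖u w‖ ^ p) (parCyl p 1 S z'))
    (hlam : (⨍ w in parCyl p 1 S z', ‖u w‖ ^ p / S ^ p) ^ (1 / p) ≤ lam)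
    (hρ : 0 < ρ) (hρR : ρ ≤ R) :
    muF p lam R u z ρ ≤ (S / ρ) ^ growthExponent n p := by
  have hp : 0 ≤ p := (pos_of_betaEx_lt_self hβ).le
  refine csSup_le ((nonempty_Icc.2 hρR).image _) (forall_mem_image.2 fun r hr ↦ ?_)
  have hr₀ : 0 < r := hρ.trans_le hr.1
  have hS : 0 ≤ S := (hρ.le.trans hρR).trans hRS
  calc mutilde p lam u z r ≤ (S / r) ^ growthExponent n p :=
        mutilde_le_rpow_of_parCyl_subset hβ hr₀ (hr.2.trans hRS)
          ((parCyl_subset_parCyl hp one_pos le_rfl hr₀.le hr.2 z).trans hsub) hu hlam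
    _ ≤ (S / ρ) ^ growthExponent n p := by
        have := growthExponent_nonneg hβ
        have := hr.1
        gcongr

theorem scaling_factor_growth_general (hβ : betaEx n p < p) (hlam : 0 < lam)
    (hu : IntegrableOn (fun w ↦ ‖u w‖ ^ p) (parCyl p 1 R z)) :
    (∀ ρ s : ℝ, 0 < ρ → ρ ≤ s → s ≤ R →
      muF p lam R u z ρ
        ≤ (s / ρ) ^ (((n : ℝ) + 2 * p) / (p - betaEx n p)) * muF p lam R u z s) ∧
    (∀ (S : ℝ) (z' : Spc n × ℝ), R ≤ S → parCyl p 1 R z ⊆ parCyl p 1 S z' →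
      IntegrableOn (fun w ↦ ‖u w‖ ^ p) (parCyl p 1 S z') →
      (⨍ w in parCyl p 1 S z', ‖u w‖ ^ p / S ^ p) ^ (1 / p) ≤ lam →
      ∀ ρ ∈ Ioc (0 : ℝ) R,
        muF p lam R u z ρ ≤ (S / ρ) ^ (((n : ℝ) + 2 * p) / (p - betaEx n p))) :=
  ⟨fun _ _ hρ hρs hsR ↦ muF_le_rpow_mul_muF hβ hlam hu hρ hρs hsR,
    fun _ _ hRS hsub hu' hmean _ hρ ↦
      muF_le_rpow_of_parCyl_subset hβ hRS hsub hu' hmean hρ.1 hρ.2⟩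

end MonotonizedScalingFactor

/-- Controlled growth of the scaling factors: let `max{2n/(n+2), 1} < p < 2n/(n−2)₊`. Then
for every `λ ≥ λ₀`, every `z₀ ∈ Q_{2R}` and all radii `0 < ρ < s ≤ R` one has
`μ_{z₀;ρ}^{(λ)} ≤ (s/ρ)^{(n+2p)/(p−β)} μ_{z₀;s}^{(λ)}`; in particular
`μ_{z₀;ρ}^{(λ)} ≤ (4R/ρ)^{(n+2p)/(p−β)}` for all `ρ ∈ (0, R]`. -/
theorem scaling_factor_growth (n : ℕ) (p : ℝ) (hn : 1 ≤ n)
    (hp : max (2 * (n : ℝ) / ((n : ℝ) + 2)) 1 < p)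
    (hp' : (n : ℝ) ≤ 2 ∨ p < 2 * (n : ℝ) / ((n : ℝ) - 2)) :
    ∀ (N : ℕ) (T R : ℝ) (Ω : Set (Spc n)) (u : Spc n × ℝ → Vec N)
      (zhat : Spc n × ℝ) (lam₀ lam : ℝ),
      0 < T → IsOpen Ω → Bornology.IsBounded Ω → 0 < R →
      parCyl p 1 (4 * R) zhat ⊆ Ω ×ˢ Ioo 0 T →
      Measurable u →
      MemLp u (ENNReal.ofReal p) (volume.restrict (Ω ×ˢ Ioo 0 T)) →
      1 + (⨍ w in parCyl p 1 (4 * R) zhat, ‖u w‖ ^ p / (4 * R) ^ p) ^ (1 / p) ≤ lam₀ →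
      lam₀ ≤ lam →
      ∀ z₀ ∈ parCyl p 1 (2 * R) zhat,
        (∀ ρ s : ℝ, 0 < ρ → ρ < s → s ≤ R →
          muF p lam R u z₀ ρ
            ≤ (s / ρ) ^ (((n : ℝ) + 2 * p) / (p - betaEx n p)) * muF p lam R u z₀ s) ∧
        (∀ ρ ∈ Ioc (0 : ℝ) R,
          muF p lam R u z₀ ρ ≤ (4 * R / ρ) ^ (((n : ℝ) + 2 * p) / (p - betaEx n p))) := by
  intro N T R Ω u zhat lam₀ lam _ _ _ hR hQ _ hu hlam₀ hlam z₀ hz₀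
  have hp₁ : 1 < p := (le_max_right _ _).trans_lt hp
  have hsub := parCyl_one_subset_of_mem hp₁.le hR.le (by linarith : R + 2 * R ≤ 4 * R) hz₀
  have hint := integrableOn_norm_rpow_of_memLp (by linarith) hQ hu
  have hmean : 0 ≤ (⨍ w in parCyl p 1 (4 * R) zhat, ‖u w‖ ^ p / (4 * R) ^ p) ^ (1 / p) :=
    Real.rpow_nonneg (scaledEnergy_one p u _ _ ▸ scaledEnergy_nonneg (by positivity)) _
  obtain ⟨hgrowth, hbound⟩ := scaling_factor_growth_general (betaEx_lt_self_iff.2 ⟨hp₁, hp'⟩)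
    (by linarith : 0 < lam) (hint.mono_set hsub)
  exact ⟨fun ρ s hρ hρs hsR ↦ hgrowth ρ s hρ hρs.le hsR,
    hbound (4 * R) zhat (by linarith) hsub hint (by linarith)⟩
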